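/- Let μ be a probability measure concentrated on (0,1] and let D_μ be the determining set of the Weighted V@R utility corresponding to μ. Then L^1_w(D_μ) = L^1_s(D_μ). -/

import Mathlib

open MeasureTheory Filter Set
open scoped ENNReal

variable {Ω : Type*} [MeasurableSpace Ω]

/-- Densities of probability measures absolutely continuous w.r.t. `P`. -/
def Dens (P : Measure Ω) : Set (Ω → ℝ) :=
  {Z | Measurable Z ∧ (∀ ω, 0 ≤ Z ω) ∧ ∫⁻ ω, ENNReal.ofReal (Z ω) ∂P = 1}

/-- `E_Q[X] = E_Q[X⁺] − E_Q[X⁻]` with the convention `∞ − ∞ = −∞`, where `dQ/dP = Z`. -/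
noncomputable def eexp (P : Measure Ω) (Z X : Ω → ℝ) : EReal :=
  if (∫⁻ ω, ENNReal.ofReal (-(Z ω * X ω)) ∂P) = ⊤ then ⊥
  else ((∫⁻ ω, ENNReal.ofReal (Z ω * X ω) ∂P : ℝ≥0∞) : EReal)
    - ((∫⁻ ω, ENNReal.ofReal (-(Z ω * X ω)) ∂P : ℝ≥0∞) : EReal)

/-- Coherent utility function determined by a set of densities `D`. -/
noncomputable def cohU (P : Measure Ω) (D : Set (Ω → ℝ)) (X : Ω → ℝ) : EReal :=
  ⨅ Z ∈ D, eexp P Z X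

/-- The weak `L¹`-space associated with `D`. -/
def Lw (P : Measure Ω) (D : Set (Ω → ℝ)) : Set (Ω → ℝ) :=
  {X | Measurable X ∧ ⊥ < cohU P D X ∧ ⊥ < cohU P D (fun ω => -X ω)}

noncomputable def tailSup (P : Measure Ω) (D : Set (Ω → ℝ)) (X : Ω → ℝ) (n : ℕ) : ℝ≥0∞ :=
  ⨆ Z ∈ D, ∫⁻ ω in {ω | (n : ℝ) < |X ω|}, ENNReal.ofReal (Z ω * |X ω|) ∂P

/-- The strong `L¹`-space associated with `D`. -/
def Ls (P : Measure Ω) (D : Set (Ω → ℝ)) : Set (Ω → ℝ) :=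
  {X | Measurable X ∧ Tendsto (tailSup P D X) atTop (nhds 0)}

/-- Risk-neutral densities for the set `A` of attainable P&Ls. -/
def RiskNeutral (P : Measure Ω) (A : Set (Ω → ℝ)) : Set (Ω → ℝ) :=
  {Z | Z ∈ Dens P ∧ ∀ X ∈ A, eexp P Z X ≤ 0}

/-- `A` is `D`-consistent. -/
def DConsistent (P : Measure Ω) (D A : Set (Ω → ℝ)) : Prop :=
  ∃ A' ⊆ A ∩ Ls P D, D ∩ RiskNeutral P A = D ∩ RiskNeutral P A'

/-- Sequential compactness of `D` in the weak topology `σ(L¹, L^∞)`. -/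
def WSeqCompact (P : Measure Ω) (D : Set (Ω → ℝ)) : Prop :=
  ∀ Z : ℕ → Ω → ℝ, (∀ n, Z n ∈ D) → ∃ W ∈ D, ∃ φ : ℕ → ℕ, StrictMono φ ∧
    ∀ g : Ω → ℝ, Measurable g → (∃ C : ℝ, ∀ ω, |g ω| ≤ C) →
      Tendsto (fun k => ∫ ω, Z (φ k) ω * g ω ∂P) atTop (nhds (∫ ω, W ω * g ω ∂P))

/-- `D` is closed under `L¹`-convergence (within densities). -/
def L1Closed (P : Measure Ω) (D : Set (Ω → ℝ)) : Prop :=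
  ∀ Z : ℕ → Ω → ℝ, (∀ n, Z n ∈ D) → ∀ W ∈ Dens P,
    Tendsto (fun n => ∫ ω, |Z n ω - W ω| ∂P) atTop (nhds 0) → W ∈ D


/-- The determining set `D_λ = {Q ∈ 𝒫 : dQ/dP ≤ λ⁻¹}` of Tail V@R of order `λ`. -/
def TVDens (P : Measure Ω) (l : ℝ) : Set (Ω → ℝ) :=
  {Z | Z ∈ Dens P ∧ ∀ ω, Z ω ≤ l⁻¹}

/-- Tail V@R utility `u_λ(X) = inf_{Q ∈ D_λ} E_Q[X]` as a real number (for bounded `X`). -/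
noncomputable def tvU (P : Measure Ω) (l : ℝ) (X : Ω → ℝ) : ℝ :=
  sInf {r : ℝ | ∃ W ∈ TVDens P l, r = ∫ ω, W ω * X ω ∂P}

/-- The determining set of the Weighted V@R utility `u_μ(X) = ∫ u_λ(X) μ(dλ)` on `L^∞`:
all densities `Z ∈ 𝒫` with `E_Z[X] ≥ u_μ(X)` for every bounded measurable `X`. -/
def WVDet (P : Measure Ω) (μ : Measure ℝ) : Set (Ω → ℝ) :=
  {Z | Z ∈ Dens P ∧ ∀ X : Ω → ℝ, Measurable X → (∃ C : ℝ, ∀ ω, |X ω| ≤ C) →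
    (∫ l, tvU P l X ∂μ) ≤ ∫ ω, Z ω * X ω ∂P}

/-- Densities bounded by `n + 1`. -/
def boundedDens (P : Measure Ω) (n : ℕ) : Set (Ω → ℝ) :=
  {W | W ∈ Dens P ∧ ∀ ω, W ω ≤ n + 1}

/-- The supremum of `E_W[V]` over densities `W` bounded by `n + 1`. -/
noncomputable def boundedSup (P : Measure Ω) (n : ℕ) (V : Ω → ℝ) : ℝ≥0∞ :=
  ⨆ W ∈ boundedDens P n, ∫⁻ ω, ENNReal.ofReal (W ω * V ω) ∂P

/-- The integer `n` with `n + 1 ≤ l⁻¹ < n + 2`, for `0 < l ≤ 1`. -/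
noncomputable def levelIndex (l : ℝ) : ℕ := ⌊l⁻¹ - 1⌋₊

lemma measurable_levelIndex : Measurable levelIndex :=
  Nat.measurable_floor.comp (measurable_inv.sub_const 1)

lemma levelIndex_add_one_le {l : ℝ} (hl : l ∈ Ioc (0 : ℝ) 1) : (levelIndex l : ℝ) + 1 ≤ l⁻¹ := by
  have h : (1 : ℝ) ≤ l⁻¹ := (one_le_inv₀ hl.1).2 hl.2
  have := Nat.floor_le (sub_nonneg.2 h)
  unfold levelIndex
  linarith

lemma inv_le_two_mul_levelIndex (l : ℝ) : l⁻¹ ≤ 2 * ((levelIndex l : ℝ) + 1) := by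
  have := Nat.lt_floor_add_one (l⁻¹ - 1)
  have h0 : (0 : ℝ) ≤ (⌊l⁻¹ - 1⌋₊ : ℝ) := Nat.cast_nonneg _
  unfold levelIndex
  linarith

lemma one_mem_dens (P : Measure Ω) [IsProbabilityMeasure P] : (fun _ => (1 : ℝ)) ∈ Dens P :=
  ⟨measurable_const, fun _ => zero_le_one, by simp⟩

lemma Dens.integrable {P : Measure Ω} {Z : Ω → ℝ} (hZ : Z ∈ Dens P) : Integrable Z P := by
  refine ⟨hZ.1.aestronglyMeasurable, ?_⟩
  rw [hasFiniteIntegral_iff_ofReal (ae_of_all _ hZ.2.1), hZ.2.2]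
  exact ENNReal.one_lt_top

lemma Dens.integral_eq_one {P : Measure Ω} {Z : Ω → ℝ} (hZ : Z ∈ Dens P) : ∫ ω, Z ω ∂P = 1 := by
  rw [integral_eq_lintegral_of_nonneg_ae (ae_of_all _ hZ.2.1) hZ.1.aestronglyMeasurable, hZ.2.2]
  simp

lemma Dens.integrable_mul {P : Measure Ω} {Z X : Ω → ℝ} (hZ : Z ∈ Dens P) (hX : Measurable X)
    {C : ℝ} (hC : ∀ ω, |X ω| ≤ C) : Integrable (fun ω => Z ω * X ω) P :=
  (Dens.integrable hZ).mul_bdd (c := C) hX.aestronglyMeasurable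
    (ae_of_all _ fun ω => by simpa using hC ω)

lemma Dens.abs_integral_mul_le {P : Measure Ω} {Z X : Ω → ℝ} (hZ : Z ∈ Dens P) {C : ℝ}
    (hC : ∀ ω, |X ω| ≤ C) : |∫ ω, Z ω * X ω ∂P| ≤ C := by
  have h := norm_integral_le_of_norm_le (f := fun ω => Z ω * X ω) (g := fun ω => Z ω * C)
    ((Dens.integrable hZ).mul_const C) (ae_of_all _ fun ω => by
      rw [norm_mul, Real.norm_eq_abs, abs_of_nonneg (hZ.2.1 ω)]
      exact mul_le_mul_of_nonneg_left (hC ω) (hZ.2.1 ω))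
  rwa [integral_mul_const, Dens.integral_eq_one hZ, one_mul] at h

lemma one_mem_TVDens (P : Measure Ω) [IsProbabilityMeasure P] {l : ℝ} (hl : l ∈ Ioc (0 : ℝ) 1) :
    (fun _ => (1 : ℝ)) ∈ TVDens P l :=
  ⟨one_mem_dens P, fun _ => (one_le_inv₀ hl.1).2 hl.2⟩

lemma tvU_le {P : Measure Ω} {l : ℝ} {X W : Ω → ℝ} {C : ℝ} (hC : ∀ ω, |X ω| ≤ C)
    (hW : W ∈ TVDens P l) : tvU P l X ≤ ∫ ω, W ω * X ω ∂P := by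
  refine csInf_le ⟨-C, ?_⟩ ⟨W, hW, rfl⟩
  rintro r ⟨W', hW', rfl⟩
  exact (abs_le.1 (Dens.abs_integral_mul_le hW'.1 hC)).1

lemma le_tvU {P : Measure Ω} [IsProbabilityMeasure P] {l : ℝ} (hl : l ∈ Ioc (0 : ℝ) 1)
    {X : Ω → ℝ} {a : ℝ} (h : ∀ W ∈ TVDens P l, a ≤ ∫ ω, W ω * X ω ∂P) : a ≤ tvU P l X := by
  refine le_csInf ⟨_, _, one_mem_TVDens P hl, rfl⟩ ?_
  rintro r ⟨W, hW, rfl⟩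
  exact h W hW

lemma monotoneOn_tvU (P : Measure Ω) [IsProbabilityMeasure P] {X : Ω → ℝ} {C : ℝ}
    (hC : ∀ ω, |X ω| ≤ C) : MonotoneOn (fun l => tvU P l X) (Ioc (0 : ℝ) 1) := by
  intro a ha b hb hab
  refine le_tvU hb fun W hW => tvU_le hC ⟨hW.1, fun ω => (hW.2 ω).trans ?_⟩
  exact inv_anti₀ ha.1 hab

lemma integrable_tvU (P : Measure Ω) [IsProbabilityMeasure P] (μ : Measure ℝ)
    [IsProbabilityMeasure μ] (hμ : μ (Ioc (0 : ℝ) 1)ᶜ = 0) {X : Ω → ℝ} {C : ℝ}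
    (hC : ∀ ω, |X ω| ≤ C) : Integrable (fun l => tvU P l X) μ := by
  have hae : ∀ᵐ l ∂μ, l ∈ Ioc (0 : ℝ) 1 := hμ
  have hm : AEMeasurable (fun l => tvU P l X) μ := by
    have := aemeasurable_restrict_of_monotoneOn (μ := μ) measurableSet_Ioc (monotoneOn_tvU P hC)
    rwa [Measure.restrict_eq_self_of_ae_mem hae] at this
  refine Integrable.of_bound hm.aestronglyMeasurable C ?_
  filter_upwards [hae] with l hl
  have h1 := one_mem_TVDens P hl
  exact abs_le.2 ⟨le_tvU hl fun W hW => (abs_le.1 (Dens.abs_integral_mul_le hW.1 hC)).1,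
    (tvU_le hC h1).trans (abs_le.1 (Dens.abs_integral_mul_le h1.1 hC)).2⟩

lemma boundedSup_mono (P : Measure Ω) (n : ℕ) {V V' : Ω → ℝ} (h : ∀ ω, V ω ≤ V' ω) :
    boundedSup P n V ≤ boundedSup P n V' := by
  refine iSup₂_mono fun W hW => lintegral_mono fun ω => ?_
  exact ENNReal.ofReal_le_ofReal (mul_le_mul_of_nonneg_left (h ω) (hW.1.2.1 ω))

lemma boundedSup_le (P : Measure Ω) (n : ℕ) {V : Ω → ℝ} (hV : ∀ ω, 0 ≤ V ω) :
    boundedSup P n V ≤ ENNReal.ofReal (n + 1) * ∫⁻ ω, ENNReal.ofReal (V ω) ∂P := by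
  refine iSup₂_le fun W hW => ?_
  rw [← lintegral_const_mul' _ _ ENNReal.ofReal_ne_top]
  refine lintegral_mono fun ω => ?_
  rw [← ENNReal.ofReal_mul (by positivity)]
  exact ENNReal.ofReal_le_ofReal (mul_le_mul_of_nonneg_right (hW.2 ω) (hV ω))

/-- Doubling the bound on the densities at most doubles the supremum. -/
lemma lintegral_le_two_mul_boundedSup (P : Measure Ω) [IsProbabilityMeasure P] (n : ℕ)
    {V W : Ω → ℝ} (hV : ∀ ω, 0 ≤ V ω) (hW : W ∈ Dens P) (hWn : ∀ ω, W ω ≤ 2 * ((n : ℝ) + 1)) :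
    ∫⁻ ω, ENNReal.ofReal (W ω * V ω) ∂P ≤ 2 * boundedSup P n V := by
  have hn : (0 : ℝ) ≤ n := Nat.cast_nonneg n
  have hd : (0 : ℝ) < 2 * n + 1 := by positivity
  set a : ℝ := n / (2 * n + 1) with ha
  set b : ℝ := (n + 1) / (2 * n + 1) with hb
  have ha0 : 0 ≤ a := by positivity
  have hb0 : 0 ≤ b := by positivity
  have hab : a + b = 1 := by rw [ha, hb]; field_simp; ring
  have hmem : (fun ω => a * W ω + b) ∈ boundedDens P n := by
    refine ⟨⟨(hW.1.const_mul a).add_const b, fun ω => ?_, ?_⟩, fun ω => ?_⟩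
    · have := hW.2.1 ω
      positivity
    · have : ∀ ω, ENNReal.ofReal (a * W ω + b)
          = ENNReal.ofReal a * ENNReal.ofReal (W ω) + ENNReal.ofReal b := fun ω => by
        rw [ENNReal.ofReal_add (mul_nonneg ha0 (hW.2.1 ω)) hb0, ENNReal.ofReal_mul ha0]
      simp_rw [this]
      rw [lintegral_add_right _ measurable_const,
        lintegral_const_mul' _ _ ENNReal.ofReal_ne_top, hW.2.2, lintegral_const, measure_univ,
        mul_one, mul_one, ← ENNReal.ofReal_add ha0 hb0, hab, ENNReal.ofReal_one]
    · calc a * W ω + b ≤ a * (2 * ((n : ℝ) + 1)) + b := by gcongr; exact hWn ω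
        _ = n + 1 := by rw [ha, hb]; field_simp
  have hle : ∀ ω, W ω ≤ 2 * (a * W ω + b) := fun ω => by
    have : 2 * (a * W ω + b) - W ω = (2 * ((n : ℝ) + 1) - W ω) / (2 * n + 1) := by
      rw [ha, hb]; field_simp; ring
    have h2 : 0 ≤ (2 * ((n : ℝ) + 1) - W ω) / (2 * n + 1) :=
      div_nonneg (sub_nonneg.2 (hWn ω)) hd.le
    linarith
  calc ∫⁻ ω, ENNReal.ofReal (W ω * V ω) ∂P
      ≤ ∫⁻ ω, 2 * ENNReal.ofReal ((a * W ω + b) * V ω) ∂P := by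
        refine lintegral_mono fun ω => ?_
        have h2 : (2 : ℝ≥0∞) = ENNReal.ofReal 2 := by simp
        rw [h2, ← ENNReal.ofReal_mul zero_le_two, ← mul_assoc]
        exact ENNReal.ofReal_le_ofReal (mul_le_mul_of_nonneg_right (hle ω) (hV ω))
    _ = 2 * ∫⁻ ω, ENNReal.ofReal ((a * W ω + b) * V ω) ∂P :=
        lintegral_const_mul' _ _ ENNReal.ofNat_ne_top
    _ ≤ 2 * boundedSup P n V := by
        gcongr
        exact le_iSup₂_of_le (f := fun W (_ : W ∈ boundedDens P n) =>
          ∫⁻ ω, ENNReal.ofReal (W ω * V ω) ∂P) _ hmem le_rfl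

/-- Upper bound for expectations of bounded nonnegative variables over `D_μ`. -/
lemma WVDet.lintegral_le (P : Measure Ω) [IsProbabilityMeasure P] (μ : Measure ℝ)
    [IsProbabilityMeasure μ] (hμ : μ (Ioc (0 : ℝ) 1)ᶜ = 0) {Z V : Ω → ℝ} (hZ : Z ∈ WVDet P μ)
    (hVm : Measurable V) (hV : ∀ ω, 0 ≤ V ω) {C : ℝ} (hC : ∀ ω, |V ω| ≤ C) :
    ∫⁻ ω, ENNReal.ofReal (Z ω * V ω) ∂P ≤ ∫⁻ l, 2 * boundedSup P (levelIndex l) V ∂μ := by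
  have hC' : ∀ ω, |-V ω| ≤ C := fun ω => by simpa using hC ω
  have hae : ∀ᵐ l ∂μ, l ∈ Ioc (0 : ℝ) 1 := hμ
  have hnn : ∀ {W : Ω → ℝ}, W ∈ Dens P → 0 ≤ᵐ[P] fun ω => W ω * V ω :=
    fun hW => ae_of_all _ fun ω => mul_nonneg (hW.2.1 ω) (hV ω)
  have h := hZ.2 (fun ω => -V ω) hVm.neg ⟨C, hC'⟩
  have h2 : ∫ ω, Z ω * V ω ∂P ≤ ∫ l, -tvU P l (fun ω => -V ω) ∂μ := by
    simp only [mul_neg, integral_neg] at h ⊢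
    linarith
  rw [← ofReal_integral_eq_lintegral_ofReal (Dens.integrable_mul hZ.1 hVm hC) (hnn hZ.1)]
  have hint : Integrable (fun l => -tvU P l fun ω => -V ω) μ := (integrable_tvU P μ hμ hC').neg
  have hneg : ∀ᵐ l ∂μ, 0 ≤ -tvU P l (fun ω => -V ω) := by
    filter_upwards [hae] with l hl
    have h1 := one_mem_TVDens P hl
    have := tvU_le hC' h1
    have h3 := integral_nonneg (μ := P) (f := V) hV
    simp only [one_mul, integral_neg] at this
    linarith
  refine (ENNReal.ofReal_le_ofReal h2).trans ?_
  rw [ofReal_integral_eq_lintegral_ofReal hint hneg]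
  refine lintegral_mono_ae ?_
  filter_upwards [hae] with l hl
  by_cases htop : 2 * boundedSup P (levelIndex l) V = ⊤
  · rw [htop]; exact le_top
  refine ENNReal.ofReal_le_of_le_toReal (neg_le.1 (le_tvU hl fun W hW => ?_))
  simp only [mul_neg, integral_neg]
  refine neg_le_neg ?_
  rw [integral_eq_lintegral_of_nonneg_ae (hnn hW.1) (hW.1.1.mul hVm).aestronglyMeasurable]
  exact ENNReal.toReal_mono htop (lintegral_le_two_mul_boundedSup P _ hV hW.1
    fun ω => (hW.2 ω).trans (inv_le_two_mul_levelIndex l))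

/-- Mixtures over `μ` of densities bounded by `levelIndex l + 1` belong to `D_μ`. -/
lemma exists_mixture_mem_WVDet (P : Measure Ω) [IsProbabilityMeasure P] (μ : Measure ℝ)
    [IsProbabilityMeasure μ] (hμ : μ (Ioc (0 : ℝ) 1)ᶜ = 0) {W : ℕ → Ω → ℝ}
    (hW : ∀ n, W n ∈ boundedDens P n) :
    ∃ Z ∈ WVDet P μ, ∀ V : Ω → ℝ, Measurable V → (∀ ω, 0 ≤ V ω) →
      ∫⁻ ω, ENNReal.ofReal (Z ω * V ω) ∂P
        = ∫⁻ l, ∫⁻ ω, ENNReal.ofReal (W (levelIndex l) ω * V ω) ∂P ∂μ := by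
  have hae : ∀ᵐ l ∂μ, l ∈ Ioc (0 : ℝ) 1 := hμ
  have hjoint : Measurable fun p : ℝ × Ω => W (levelIndex p.1) p.2 := by
    have h : Measurable fun p : ℕ × Ω => W p.1 p.2 :=
      measurable_from_prod_countable_right fun n => (hW n).1.1
    exact h.comp ((measurable_levelIndex.comp measurable_fst).prodMk measurable_snd)
  have hjoint' : Measurable fun p : Ω × ℝ => W (levelIndex p.2) p.1 :=
    hjoint.comp measurable_swap
  set G : Ω → ℝ≥0∞ := fun ω => ∫⁻ l, ENNReal.ofReal (W (levelIndex l) ω) ∂μ with hG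
  have hGm : Measurable G := hjoint'.ennreal_ofReal.lintegral_prod_right'
  have htonelli : ∀ V : Ω → ℝ, Measurable V → (∀ ω, 0 ≤ V ω) →
      ∫⁻ ω, G ω * ENNReal.ofReal (V ω) ∂P
        = ∫⁻ l, ∫⁻ ω, ENNReal.ofReal (W (levelIndex l) ω * V ω) ∂P ∂μ := by
    intro V hVm hV
    rw [lintegral_lintegral_swap
      ((hjoint.mul (hVm.comp measurable_snd)).ennreal_ofReal.aemeasurable)]
    refine lintegral_congr fun ω => ?_
    simp_rw [ENNReal.ofReal_mul' (hV ω)]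
    rw [lintegral_mul_const' _ _ ENNReal.ofReal_ne_top]
  have hGone : ∫⁻ ω, G ω ∂P = 1 := by
    have h := htonelli (fun _ => 1) measurable_const fun _ => zero_le_one
    simpa [(hW _).1.2.2] using h
  have hGtop : ∀ᵐ ω ∂P, G ω < ⊤ := ae_lt_top hGm (by simp [hGone])
  have hZmul : ∀ V : Ω → ℝ, (∀ ω, 0 ≤ V ω) → ∫⁻ ω, ENNReal.ofReal ((G ω).toReal * V ω) ∂P
      = ∫⁻ ω, G ω * ENNReal.ofReal (V ω) ∂P := by
    intro V hV
    refine lintegral_congr_ae ?_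
    filter_upwards [hGtop] with ω hω
    rw [ENNReal.ofReal_mul' (hV ω), ENNReal.ofReal_toReal hω.ne]
  have hZ : (fun ω => (G ω).toReal) ∈ Dens P := by
    refine ⟨hGm.ennreal_toReal, fun _ => ENNReal.toReal_nonneg, ?_⟩
    simpa [hGone] using hZmul (fun _ => 1) fun _ => zero_le_one
  refine ⟨_, ⟨hZ, ?_⟩, fun V hVm hV => (hZmul V hV).trans (htonelli V hVm hV)⟩
  rintro X hX ⟨C, hC⟩
  have hWint : Integrable (fun p : ℝ × Ω => W (levelIndex p.1) p.2) (μ.prod P) := by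
    refine ⟨hjoint.aestronglyMeasurable, ?_⟩
    rw [hasFiniteIntegral_iff_ofReal (ae_of_all _ fun p => (hW _).1.2.1 _),
      lintegral_prod _ hjoint.ennreal_ofReal.aemeasurable]
    simp [(hW _).1.2.2]
  have hint : Integrable (fun p : ℝ × Ω => W (levelIndex p.1) p.2 * X p.2) (μ.prod P) :=
    hWint.mul_bdd (c := C) (hX.comp measurable_snd).aestronglyMeasurable
      (ae_of_all _ fun p => by simpa using hC p.2)
  have hEq : ∫ ω, (G ω).toReal * X ω ∂P = ∫ l, ∫ ω, W (levelIndex l) ω * X ω ∂P ∂μ := by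
    rw [integral_integral_swap hint]
    refine integral_congr_ae (ae_of_all _ fun ω => ?_)
    dsimp only
    rw [integral_mul_const, integral_eq_lintegral_of_nonneg_ae
      (ae_of_all _ fun l => (hW _).1.2.1 ω)
      (hjoint.comp measurable_prodMk_right).aestronglyMeasurable]
  rw [hEq]
  refine integral_mono_ae (integrable_tvU P μ hμ hC) hint.integral_prod_left ?_
  filter_upwards [hae] with l hl
  exact tvU_le hC ⟨(hW _).1, fun ω => ((hW _).2 ω).trans (levelIndex_add_one_le hl)⟩

lemma one_mem_boundedDens (P : Measure Ω) [IsProbabilityMeasure P] (n : ℕ) :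
    (fun _ => (1 : ℝ)) ∈ boundedDens P n :=
  ⟨one_mem_dens P, fun _ => by simp⟩

lemma measurable_boundedSup_levelIndex (P : Measure Ω) (V : Ω → ℝ) :
    Measurable fun l => 2 * boundedSup P (levelIndex l) V :=
  (measurable_from_nat (f := fun n => 2 * boundedSup P n V)).comp measurable_levelIndex

lemma lintegral_mul_abs_ne_top_of_mem_Lw {P : Measure Ω} {D : Set (Ω → ℝ)} {X Z : Ω → ℝ}
    (hX : X ∈ Lw P D) (hZ : Z ∈ D) (hZd : Z ∈ Dens P) :
    ∫⁻ ω, ENNReal.ofReal (Z ω * |X ω|) ∂P ≠ ⊤ := by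
  have key : ∀ Y : Ω → ℝ, ⊥ < cohU P D Y → ∫⁻ ω, ENNReal.ofReal (-(Z ω * Y ω)) ∂P ≠ ⊤ := by
    intro Y hY htop
    have h : cohU P D Y ≤ eexp P Z Y := iInf₂_le Z hZ
    rw [eexp, if_pos htop] at h
    exact absurd hY (not_lt.2 h)
  have h1 := key X hX.2.1
  have h2 := key _ hX.2.2
  simp only [mul_neg, neg_neg] at h2
  refine ne_top_of_le_ne_top (ENNReal.add_ne_top.2 ⟨h1, h2⟩) ?_
  have hm : Measurable fun ω => ENNReal.ofReal (Z ω * X ω) := (hZd.1.mul hX.1).ennreal_ofReal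
  rw [← lintegral_add_right _ hm]
  refine lintegral_mono fun ω => ?_
  rcases abs_cases (X ω) with ⟨h, -⟩ | ⟨h, -⟩
  · rw [h]; exact le_add_self
  · rw [h, mul_neg]; exact le_self_add

/-- Integrability against every element of `D_μ` bounds the mixture of the suprema. -/
lemma lintegral_boundedSup_ne_top (P : Measure Ω) [IsProbabilityMeasure P] (μ : Measure ℝ)
    [IsProbabilityMeasure μ] (hμ : μ (Ioc (0 : ℝ) 1)ᶜ = 0) {V : Ω → ℝ} (hVm : Measurable V)
    (hV : ∀ ω, 0 ≤ V ω) (hVint : ∫⁻ ω, ENNReal.ofReal (V ω) ∂P ≠ ⊤)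
    (h : ∀ Z ∈ WVDet P μ, ∫⁻ ω, ENNReal.ofReal (Z ω * V ω) ∂P ≠ ⊤) :
    ∫⁻ l, 2 * boundedSup P (levelIndex l) V ∂μ ≠ ⊤ := by
  have hfin : ∀ n, boundedSup P n V ≠ ⊤ := fun n =>
    ne_top_of_le_ne_top (ENNReal.mul_ne_top ENNReal.ofReal_ne_top hVint) (boundedSup_le P n hV)
  have hex : ∀ n, ∃ W ∈ boundedDens P n,
      boundedSup P n V ≤ ∫⁻ ω, ENNReal.ofReal (W ω * V ω) ∂P + 1 := by
    intro n
    by_contra! hcon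
    have hle : boundedSup P n V + 1 ≤ boundedSup P n V := by
      rw [boundedSup, ENNReal.biSup_add ⟨_, one_mem_boundedDens P n⟩]
      exact iSup₂_le fun W hW => (hcon W hW).le
    exact absurd hle (not_le.2 (ENNReal.lt_add_right (hfin n) one_ne_zero))
  choose W hW hWle using hex
  obtain ⟨Z, hZ, hZeq⟩ := exists_mixture_mem_WVDet P μ hμ hW
  rw [lintegral_const_mul' _ _ ENNReal.ofNat_ne_top]
  refine ENNReal.mul_ne_top ENNReal.ofNat_ne_top ?_
  refine ne_top_of_le_ne_top (ENNReal.add_ne_top.2 ⟨h Z hZ, ENNReal.one_ne_top⟩)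
    ((lintegral_mono fun l => hWle (levelIndex l)).trans ?_)
  rw [lintegral_add_right _ measurable_const, hZeq V hVm hV]
  simp

lemma tendsto_setLIntegral_abs_tail {P : Measure Ω} {X : Ω → ℝ} (hX : Measurable X)
    (hint : ∫⁻ ω, ENNReal.ofReal |X ω| ∂P ≠ ⊤) :
    Tendsto (fun m : ℕ => ∫⁻ ω, ENNReal.ofReal ({ω | (m : ℝ) < |X ω|}.indicator
      (fun ω => |X ω|) ω) ∂P) atTop (nhds 0) := by
  have hs : ∀ m : ℕ, MeasurableSet {ω | (m : ℝ) < |X ω|} := fun m =>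
    measurableSet_lt measurable_const hX.abs
  rw [← lintegral_zero (μ := P) (α := Ω)]
  refine tendsto_lintegral_of_dominated_convergence (fun ω => ENNReal.ofReal |X ω|)
    (fun m => (hX.abs.indicator (hs m)).ennreal_ofReal) (fun m => ae_of_all _ fun ω => ?_) hint
    (ae_of_all _ fun ω => ?_)
  · exact ENNReal.ofReal_le_ofReal (indicator_le_self' (fun _ _ => abs_nonneg _) ω)
  · refine tendsto_const_nhds.congr' ?_
    obtain ⟨N, hN⟩ := exists_nat_ge |X ω|
    filter_upwards [eventually_ge_atTop N] with m hm
    have : ω ∉ {ω | (m : ℝ) < |X ω|} := not_lt.2 (hN.trans (by exact_mod_cast hm))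
    rw [indicator_of_notMem this, ENNReal.ofReal_zero]

/-- The upper bound for expectations over `D_μ` of a nonnegative, possibly unbounded variable. -/
lemma WVDet.lintegral_le_of_nonneg (P : Measure Ω) [IsProbabilityMeasure P] (μ : Measure ℝ)
    [IsProbabilityMeasure μ] (hμ : μ (Ioc (0 : ℝ) 1)ᶜ = 0) {Z V : Ω → ℝ} (hZ : Z ∈ WVDet P μ)
    (hVm : Measurable V) (hV : ∀ ω, 0 ≤ V ω) :
    ∫⁻ ω, ENNReal.ofReal (Z ω * V ω) ∂P ≤ ∫⁻ l, 2 * boundedSup P (levelIndex l) V ∂μ := by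
  have hlim : Tendsto (fun j : ℕ => ∫⁻ ω, ENNReal.ofReal (Z ω * min (V ω) j) ∂P) atTop
      (nhds (∫⁻ ω, ENNReal.ofReal (Z ω * V ω) ∂P)) := by
    refine lintegral_tendsto_of_tendsto_of_monotone
      (fun j => (hZ.1.1.mul (hVm.min measurable_const)).ennreal_ofReal.aemeasurable)
      (ae_of_all _ fun ω i j hij => ?_) (ae_of_all _ fun ω => ?_)
    · refine ENNReal.ofReal_le_ofReal (mul_le_mul_of_nonneg_left ?_ (hZ.1.2.1 ω))
      exact min_le_min_left _ (by exact_mod_cast hij)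
    · refine tendsto_const_nhds.congr' ?_
      obtain ⟨N, hN⟩ := exists_nat_ge (V ω)
      filter_upwards [eventually_ge_atTop N] with j hj
      rw [min_eq_left (hN.trans (by exact_mod_cast hj))]
  refine le_of_tendsto' hlim fun j => ?_
  have h0 : ∀ ω, 0 ≤ min (V ω) (j : ℝ) := fun ω => le_min (hV ω) (Nat.cast_nonneg j)
  refine (WVDet.lintegral_le P μ hμ hZ (hVm.min measurable_const) h0 (C := j) fun ω => ?_).trans
    (lintegral_mono fun l => ?_)
  · rw [abs_of_nonneg (h0 ω)]
    exact min_le_right _ _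
  · exact mul_le_mul_right (boundedSup_mono P _ fun ω => min_le_left _ _) 2

lemma Lw_WVDet_subset_Ls (P : Measure Ω) [IsProbabilityMeasure P] (μ : Measure ℝ)
    [IsProbabilityMeasure μ] (hμ : μ (Ioc (0 : ℝ) 1)ᶜ = 0) :
    Lw P (WVDet P μ) ⊆ Ls P (WVDet P μ) := by
  intro X hX
  have hXm := hX.1
  refine ⟨hXm, ?_⟩
  have hs : ∀ m : ℕ, MeasurableSet {ω | (m : ℝ) < |X ω|} := fun m =>
    measurableSet_lt measurable_const hXm.abs
  have hZfin : ∀ Z ∈ WVDet P μ, ∫⁻ ω, ENNReal.ofReal (Z ω * |X ω|) ∂P ≠ ⊤ := fun Z hZ =>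
    lintegral_mul_abs_ne_top_of_mem_Lw hX hZ hZ.1
  have hint : ∫⁻ ω, ENNReal.ofReal |X ω| ∂P ≠ ⊤ := by
    obtain ⟨Z, hZ, hZeq⟩ := exists_mixture_mem_WVDet P μ hμ (one_mem_boundedDens P)
    have h := hZfin Z hZ
    rw [hZeq _ hXm.abs fun _ => abs_nonneg _] at h
    simpa using h
  set T : ℕ → Ω → ℝ := fun m => {ω | (m : ℝ) < |X ω|}.indicator fun ω => |X ω| with hT
  have hT0 : ∀ m ω, 0 ≤ T m ω := fun m ω => indicator_nonneg (fun _ _ => abs_nonneg _) ω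
  have hTle : ∀ m ω, T m ω ≤ |X ω| := fun m ω => indicator_le_self' (fun _ _ => abs_nonneg _) ω
  have hlim : Tendsto (fun m => ∫⁻ l, 2 * boundedSup P (levelIndex l) (T m) ∂μ) atTop (nhds 0) := by
    rw [← lintegral_zero (μ := μ) (α := ℝ)]
    refine tendsto_lintegral_of_dominated_convergence
      (fun l => 2 * boundedSup P (levelIndex l) fun ω => |X ω|)
      (fun m => measurable_boundedSup_levelIndex P _) (fun m => ae_of_all _ fun l => ?_)
      (lintegral_boundedSup_ne_top P μ hμ hXm.abs (fun _ => abs_nonneg _) hint hZfin)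
      (ae_of_all _ fun l => ?_)
    · exact mul_le_mul_right (boundedSup_mono P _ (hTle m)) 2
    · have h := ENNReal.Tendsto.const_mul (a := 2 * ENNReal.ofReal ((levelIndex l : ℝ) + 1))
        (tendsto_setLIntegral_abs_tail hXm hint)
        (Or.inr (ENNReal.mul_ne_top ENNReal.ofNat_ne_top ENNReal.ofReal_ne_top))
      rw [mul_zero] at h
      refine tendsto_of_tendsto_of_tendsto_of_le_of_le tendsto_const_nhds h (fun _ => zero_le)
        fun m => ?_
      dsimp only
      rw [mul_assoc]
      exact mul_le_mul_right (boundedSup_le P _ (hT0 m)) 2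
  refine tendsto_of_tendsto_of_tendsto_of_le_of_le tendsto_const_nhds hlim (fun _ => zero_le)
    fun m => iSup₂_le fun Z hZ => ?_
  refine le_trans (le_of_eq ?_) (WVDet.lintegral_le_of_nonneg P μ hμ hZ
    (hXm.abs.indicator (hs m)) (hT0 m))
  rw [← lintegral_indicator (hs m)]
  refine lintegral_congr fun ω => ?_
  by_cases hω : ω ∈ {ω | (m : ℝ) < |X ω|}
  · simp only [hT, indicator_of_mem hω]
  · simp only [hT, indicator_of_notMem hω, mul_zero, ENNReal.ofReal_zero]

lemma Ls_subset_Lw {P : Measure Ω} {D : Set (Ω → ℝ)} (hD : D ⊆ Dens P) : Ls P D ⊆ Lw P D := by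
  rintro X ⟨hXm, hlim⟩
  obtain ⟨n, hn⟩ := (hlim.eventually (gt_mem_nhds one_pos)).exists
  have hs : MeasurableSet {ω | (n : ℝ) < |X ω|} := measurableSet_lt measurable_const hXm.abs
  have hbound : ∀ Z ∈ D, ∫⁻ ω, ENNReal.ofReal (Z ω * |X ω|) ∂P ≤ (n : ℝ≥0∞) + 1 := by
    intro Z hZ
    rw [← lintegral_add_compl _ hs, add_comm]
    refine add_le_add ?_ ((le_iSup₂_of_le (f := fun Z (_ : Z ∈ D) =>
      ∫⁻ ω in {ω | (n : ℝ) < |X ω|}, ENNReal.ofReal (Z ω * |X ω|) ∂P) Z hZ le_rfl).trans hn.le)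
    calc ∫⁻ ω in {ω | (n : ℝ) < |X ω|}ᶜ, ENNReal.ofReal (Z ω * |X ω|) ∂P
        ≤ ∫⁻ ω in {ω | (n : ℝ) < |X ω|}ᶜ, ENNReal.ofReal (Z ω) * n ∂P := by
          refine setLIntegral_mono_ae' hs.compl (ae_of_all _ fun ω hω => ?_)
          rw [ENNReal.ofReal_mul ((hD hZ).2.1 ω)]
          refine mul_le_mul_right ?_ _
          rw [← ENNReal.ofReal_natCast]
          exact ENNReal.ofReal_le_ofReal (not_lt.1 hω)
      _ ≤ ∫⁻ ω, ENNReal.ofReal (Z ω) * n ∂P := setLIntegral_le_lintegral _ _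
      _ = n := by rw [lintegral_mul_const' _ _ (ENNReal.natCast_ne_top n), (hD hZ).2.2, one_mul]
  have key : ∀ Y : Ω → ℝ, (∀ ω, |Y ω| = |X ω|) → ⊥ < cohU P D Y := by
    intro Y hY
    have hle : -(((n : ℝ≥0∞) + 1 : ℝ≥0∞) : EReal) ≤ cohU P D Y := by
      refine le_iInf₂ fun Z hZ => ?_
      have hneg : ∫⁻ ω, ENNReal.ofReal (-(Z ω * Y ω)) ∂P ≤ (n : ℝ≥0∞) + 1 := by
        refine (lintegral_mono fun ω => ENNReal.ofReal_le_ofReal ?_).trans (hbound Z hZ)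
        rw [← hY ω, ← mul_neg]
        exact mul_le_mul_of_nonneg_left (neg_le_abs _) ((hD hZ).2.1 ω)
      rw [eexp, if_neg (ne_top_of_le_ne_top (by finiteness) hneg), sub_eq_add_neg]
      refine le_add_of_nonneg_of_le (EReal.coe_ennreal_nonneg _) ?_
      exact EReal.neg_le_neg_iff.2 (EReal.coe_ennreal_le_coe_ennreal_iff.2 hneg)
    refine lt_of_lt_of_le ?_ hle
    rw [bot_lt_iff_ne_bot, Ne, EReal.neg_eq_bot_iff, EReal.coe_ennreal_eq_top_iff]
    finiteness
  exact ⟨hXm, key X fun _ => rfl, key _ fun ω => abs_neg _⟩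

/-- If `μ` is a probability measure concentrated on `(0,1]` and `D_μ` is the
determining set of the corresponding Weighted V@R, then `L¹_w(D_μ) = L¹_s(D_μ)`. -/
theorem stmt_3 (P : Measure Ω) [IsProbabilityMeasure P]
    (μ : Measure ℝ) [IsProbabilityMeasure μ] (hμ : μ (Set.Ioc (0 : ℝ) 1)ᶜ = 0) :
    Lw P (WVDet P μ) = Ls P (WVDet P μ) :=
  (Lw_WVDet_subset_Ls P μ hμ).antisymm (Ls_subset_Lw fun _ hZ => hZ.1)
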